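/- The limit set J_E of the full complex continued fraction system (alphabet I = E) is not porous in ℂ, but there exists a dense subset D ⊆ J_E such that J_E is porous at every point of D. -/

import Mathlib

/-!
Write `J` for the limit set and `X` for the closed disk `|z - 1/2| ≤ 1/2`. Both halves rest on
`J = ⋃ φ_e(J)` (`phi_mem`, `exists_phi_eq`) and on the fact that the disks `e + X` have disjoint
interiors, so that `φ_e(z) ∈ J` forces `z ∈ J` for `z` in the interior of `X` (`mem_of_phi_mem`).

*Not porous.* The points `1 / (e + g)`, with `e` in the alphabet and `g ∈ J` fixed, belong to `J`.
Around `1/M`, with `M` large, they are `O(M⁻²)`-dense at scale `1/(2M)`, because inversion turns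
them into a lattice in a half-plane (`exists_near`). Hence the porosity constants at the points
`1 / (m + g)` at these scales tend to zero.

*Densely many points of porosity.* Let `g` be the golden mean `(√5 - 1)/2`, the fixed point of
`φ_1` in `X`. A Möbius change of coordinate conjugates `φ_1` to multiplication by `-g²`, and in
this coordinate `J` is locally invariant under that multiplication (`mem_of_mob_pow_mem`). A single
hole near `g` (`exists_hole`, coming from a gap between the tangent disks `e + X`) thus reproduces
at all small scales, and `J` is porous at `g`. The maps `φ_e` are local diffeomorphisms which
respect `J`, so `J` is also porous at every `φ_{ω₁} ∘ ⋯ ∘ φ_{ωₙ}(g)` (`HasHoles.map`). These points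
are dense, since compositions of two of the maps contract by `1/4` (`phi_phi_lipschitz`).
-/

open Metric Set Filter

/-- `por A x r` is the porosity of the set `A` at the point `x` at scale `r`:
the supremum of all `c ≥ 0` such that some open ball of radius `c·r` is contained
in `B(x,r) ∖ A`. -/
noncomputable def por {X : Type*} [MetricSpace X] (A : Set X) (x : X) (r : ℝ) : ℝ :=
  sSup {c : ℝ | 0 ≤ c ∧ ∃ y : X, Metric.ball y (c * r) ⊆ Metric.ball x r \ A}

/-- `A` is porous at the point `x`. -/
def PorousAt {X : Type*} [MetricSpace X] (A : Set X) (x : X) : Prop :=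
  ∃ c ∈ Set.Ioo (0 : ℝ) 1, ∃ r₀ > (0 : ℝ), ∀ r ∈ Set.Ioo (0 : ℝ) r₀, c ≤ por A x r

/-- `A` is porous. -/
def Porous {X : Type*} [MetricSpace X] (A : Set X) : Prop :=
  ∃ c ∈ Set.Ioo (0 : ℝ) 1, ∃ r₀ > (0 : ℝ), ∀ x ∈ A, ∀ r ∈ Set.Ioo (0 : ℝ) r₀, c ≤ por A x r

/-- The Gaussian integers with positive real part, as a subset of `ℂ`. -/
def Egauss : Set ℂ :=
  {w | ∃ m n : ℤ, 1 ≤ m ∧ w = (m : ℂ) + (n : ℂ) * Complex.I}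

/-- The composition `φ_{ω₀} ∘ ⋯ ∘ φ_{ω_{m-1}}` of the continued fraction maps
`φ_e z = 1/(e+z)`. -/
noncomputable def cfComp (ω : ℕ → ℂ) (m : ℕ) : ℂ → ℂ :=
  (List.ofFn fun i : Fin m => ω i).foldr (fun e g => (fun z => (e + z)⁻¹) ∘ g) id

/-- The limit set of the complex continued fraction system with alphabet `I ⊆ ℂ`. -/
def cfLimitSet (I : Set ℂ) : Set ℂ :=
  {z | ∃ ω : ℕ → ℂ, (∀ k, ω k ∈ I) ∧
    Filter.Tendsto (fun m => cfComp ω m 0) Filter.atTop (nhds z)}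

/-! ### Holes at a point and their transport -/

/-- A form of porosity at a point that is convenient for transport under maps: at every small scale
`r` there is a ball of radius comparable to `r`, centred within `r` of `x`, that misses `A`.
The ball itself need not lie in `B(x, r)`. -/
def HasHoles (A : Set ℂ) (x : ℂ) : Prop :=
  ∃ c > (0 : ℝ), ∃ r₀ > (0 : ℝ), ∀ r ∈ Set.Ioo (0 : ℝ) r₀,
    ∃ y : ℂ, dist y x < r ∧ ∀ q ∈ Metric.ball y (c * r), q ∉ A

/-- The set over which `por` takes a supremum is bounded, so that the supremum is not the
junk value `0`. -/
lemma por_bddAbove (A : Set ℂ) (x : ℂ) {r : ℝ} (hr : 0 < r) :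
    BddAbove {c : ℝ | 0 ≤ c ∧ ∃ y : ℂ, Metric.ball y (c * r) ⊆ Metric.ball x r \ A} := by
  refine ⟨4, ?_⟩
  rintro c ⟨hc, y, hy⟩
  rcases hc.eq_or_lt with h0 | hc
  · linarith
  have hcr : 0 < c * r := by positivity
  have h1 := (hy (mem_ball_self hcr)).1
  have h2 : y + ((c * r / 2 : ℝ) : ℂ) ∈ ball y (c * r) := by
    rw [mem_ball, dist_eq_norm, add_sub_cancel_left, Complex.norm_real, Real.norm_eq_abs,
      abs_of_pos (by positivity)]
    linarith
  have h3 := (hy h2).1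
  rw [mem_ball] at h1 h3
  have h4 := dist_triangle_right (y + ((c * r / 2 : ℝ) : ℂ)) y x
  rw [dist_eq_norm, add_sub_cancel_left, Complex.norm_real, Real.norm_eq_abs,
      abs_of_pos (by positivity)] at h4
  by_contra hlt
  push Not at hlt
  nlinarith

lemma HasHoles.porousAt {A : Set ℂ} {x : ℂ} (h : HasHoles A x) : PorousAt A x := by
  obtain ⟨c, hc, r₀, hr₀, H⟩ := h
  have hc' : 0 < min (c / 2) (1 / 2) := by positivity
  refine ⟨min (c / 2) (1 / 2), ⟨hc', (min_le_right _ _).trans_lt (by norm_num)⟩, r₀, hr₀, ?_⟩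
  rintro r ⟨hr, hr'⟩
  obtain ⟨y, hy, hq⟩ := H (r / 2) ⟨by linarith, by linarith⟩
  refine le_csSup (por_bddAbove A x hr) ⟨hc'.le, y, fun q hqy => ⟨?_, hq q ?_⟩⟩
  · rw [mem_ball] at hqy ⊢
    have h1 : min (c / 2) (1 / 2) * r ≤ 1 / 2 * r := by gcongr; exact min_le_right _ _
    have := dist_triangle q y x
    linarith
  · refine ball_subset_ball ?_ hqy
    have h1 : min (c / 2) (1 / 2) * r ≤ c / 2 * r := by gcongr; exact min_le_left _ _
    linarith

open scoped Topology in
/-- Holes are transported by local diffeomorphisms, because such a map and its local inverse are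
both Lipschitz. -/
lemma HasHoles.map {A B : Set ℂ} {x f' : ℂ} {f : ℂ → ℂ} (h : HasHoles A x)
    (hf : HasStrictDerivAt f f' x) (hf' : f' ≠ 0) (hAB : ∀ᶠ z in 𝓝 x, f z ∈ B → z ∈ A) :
    HasHoles B (f x) := by
  obtain ⟨c, hc, r₀, hr₀, H⟩ := h
  set g := hf.localInverse f f' x hf' with hg
  have hgd : HasStrictDerivAt g f'⁻¹ (f x) := hf.to_localInverse hf'
  have hF := hf.hasStrictFDerivAt_equiv hf'
  have hleft : ∀ᶠ z in 𝓝 x, g (f z) = z := hF.eventually_left_inverse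
  have hright : ∀ᶠ q in 𝓝 (f x), f (g q) = q := hF.eventually_right_inverse
  have hgx : g (f x) = x := hleft.self_of_nhds
  obtain ⟨K, s, hs, hK⟩ := hgd.hasStrictFDerivAt.exists_lipschitzOnWith
  obtain ⟨L, t, ht, hL⟩ := hf.hasStrictFDerivAt.exists_lipschitzOnWith
  have hgc : Tendsto g (𝓝 (f x)) (𝓝 x) := by
    have := hgd.hasDerivAt.continuousAt.tendsto
    rwa [hgx] at this
  have e1 : ∀ᶠ z in 𝓝 x, g (f z) = z ∧ z ∈ t := hleft.and ht
  have e2 : ∀ᶠ q in 𝓝 (f x), (f (g q) = q ∧ q ∈ s) ∧ (f (g q) ∈ B → g q ∈ A) :=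
    (hright.and hs).and (hgc.eventually hAB)
  obtain ⟨ε, hε, h1⟩ := Metric.eventually_nhds_iff.1 e1
  obtain ⟨δ, hδ, h2⟩ := Metric.eventually_nhds_iff.1 e2
  -- `L'` and `K'` are positive Lipschitz constants of `f` and of its local inverse.
  set L' : ℝ := L + 1 with hL'
  set K' : ℝ := K + 1 with hK'
  have hLp : 0 < L' := by positivity
  have hKp : 0 < K' := by positivity
  set c' : ℝ := min (c / (L' * K')) 1 with hc'
  have hc'p : 0 < c' := by positivity
  refine ⟨c', hc'p, min (δ / 2) (L' * min ε r₀), by positivity, ?_⟩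
  rintro r ⟨hr, hr'⟩
  have hrδ : r < δ / 2 := hr'.trans_le (min_le_left _ _)
  have hrL : r < L' * min ε r₀ := hr'.trans_le (min_le_right _ _)
  have hrL' : r / L' < min ε r₀ := by rwa [div_lt_iff₀' hLp]
  obtain ⟨y, hy, hq⟩ := H (r / L') ⟨by positivity, hrL'.trans_le (min_le_right _ _)⟩
  obtain ⟨hgy, hyt⟩ := h1 (hy.trans (hrL'.trans_le (min_le_left _ _)))
  have hfy : dist (f y) (f x) < r := by
    have h3 := hL.dist_le_mul y hyt x (mem_of_mem_nhds ht)
    have h4 : (L : ℝ) * dist y x ≤ L' * dist y x := by gcongr; simp [hL']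
    have h5 : L' * dist y x < L' * (r / L') := by gcongr
    have h6 : L' * (r / L') = r := by field_simp
    linarith
  refine ⟨f y, hfy, fun q hqy hqB => ?_⟩
  rw [mem_ball] at hqy
  have hqr : dist q (f y) < r := by
    have : c' * r ≤ 1 * r := by gcongr; exact min_le_right _ _
    linarith
  obtain ⟨⟨hfg, hqs⟩, hqA⟩ := h2 (show dist q (f x) < δ by
    have := dist_triangle q (f y) (f x); linarith)
  obtain ⟨⟨-, hys⟩, -⟩ := h2 (show dist (f y) (f x) < δ by linarith)
  refine hq (g q) ?_ (hqA (by rwa [hfg]))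
  rw [mem_ball]
  have h3 := hK.dist_le_mul q hqs (f y) hys
  rw [hgy] at h3
  have h4 : (K : ℝ) * dist q (f y) ≤ K' * dist q (f y) := by gcongr; simp [hK']
  have h5 : K' * dist q (f y) < K' * (c' * r) := by gcongr
  have h6 : K' * (c' * r) ≤ K' * (c / (L' * K') * r) := by gcongr; exact min_le_left _ _
  have h7 : K' * (c / (L' * K') * r) = c * (r / L') := by field_simp
  linarith

/-! ### Dynamics on the disk `|z - 1/2| ≤ 1/2` -/

/-- The closed disk of centre `1/2` and radius `1/2`, written as `|z|² ≤ Re z`. -/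
def InX (z : ℂ) : Prop := Complex.normSq z ≤ z.re

/-- The open disk of centre `1/2` and radius `1/2`, written as `|z|² < Re z`. -/
def InIntX (z : ℂ) : Prop := Complex.normSq z < z.re

lemma InX.re_nonneg {z : ℂ} (h : InX z) : 0 ≤ z.re := (Complex.normSq_nonneg z).trans h

lemma InIntX.inX {z : ℂ} (h : InIntX z) : InX z := le_of_lt h

lemma InIntX.re_pos {z : ℂ} (h : InIntX z) : 0 < z.re := (Complex.normSq_nonneg z).trans_lt h

lemma one_le_re {e : ℂ} (he : e ∈ Egauss) : 1 ≤ e.re := by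
  obtain ⟨m, n, hm, rfl⟩ := he
  simpa using (by exact_mod_cast hm : (1 : ℝ) ≤ m)

lemma inX_inv {v : ℂ} (h : 1 ≤ v.re) : InX v⁻¹ := by
  unfold InX
  have : 0 < Complex.normSq v := Complex.normSq_pos.2 (by rintro rfl; norm_num at h)
  rw [Complex.normSq_inv, Complex.inv_re, div_eq_mul_inv]
  have := inv_pos.2 this
  nlinarith

lemma inIntX_inv {v : ℂ} (h : 1 < v.re) : InIntX v⁻¹ := by
  unfold InIntX
  have : 0 < Complex.normSq v := Complex.normSq_pos.2 (by rintro rfl; norm_num at h)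
  rw [Complex.normSq_inv, Complex.inv_re, div_eq_mul_inv]
  have := inv_pos.2 this
  nlinarith

lemma one_le_re_add {e z : ℂ} (he : e ∈ Egauss) (hz : InX z) : 1 ≤ (e + z).re := by
  have := one_le_re he
  have := hz.re_nonneg
  rw [Complex.add_re]; linarith

lemma add_ne_zero_of_inX {e z : ℂ} (he : e ∈ Egauss) (hz : InX z) : e + z ≠ 0 := by
  intro h
  have := one_le_re_add he hz
  rw [h] at this
  norm_num at this

lemma InX.phi {e z : ℂ} (he : e ∈ Egauss) (hz : InX z) : InX (e + z)⁻¹ :=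
  inX_inv (one_le_re_add he hz)

lemma InIntX.phi {e z : ℂ} (he : e ∈ Egauss) (hz : InIntX z) : InIntX (e + z)⁻¹ := by
  have := one_le_re he
  have := hz.re_pos
  refine inIntX_inv ?_
  rw [Complex.add_re]; linarith

lemma inX_zero : InX 0 := by simp [InX]

lemma isClosed_inX : IsClosed {z : ℂ | InX z} :=
  isClosed_le Complex.continuous_normSq Complex.continuous_re

lemma isOpen_inIntX : IsOpen {z : ℂ | InIntX z} :=
  isOpen_lt Complex.continuous_normSq Complex.continuous_re

/-- The translates `e + X` of the closed disk have pairwise disjoint interiors. -/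
lemma eq_of_add_eq_add {e e' z z' : ℂ} (he : e ∈ Egauss) (he' : e' ∈ Egauss) (hz : InIntX z)
    (hz' : InX z') (h : e + z = e' + z') : z = z' := by
  obtain ⟨a, b, -, rfl⟩ := he
  obtain ⟨a', b', -, rfl⟩ := he'
  unfold InIntX at hz
  unfold InX at hz'
  rw [Complex.normSq_apply] at hz hz'
  have hre := congrArg Complex.re h
  have him := congrArg Complex.im h
  simp at hre him
  have ha : a = a' := by
    have h1 : (a : ℝ) < a' + 1 := by nlinarith [sq_nonneg z.im, sq_nonneg z'.im]
    have h2 : (a' : ℝ) < a + 1 := by nlinarith [sq_nonneg z.im, sq_nonneg z'.im]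
    norm_cast at h1 h2
    omega
  subst ha
  have hr : z.re = z'.re := by linarith
  have hi1 : z.im < 1 / 2 := by nlinarith [sq_nonneg (z.re - 1 / 2)]
  have hi2 : -(1 / 2) < z.im := by nlinarith [sq_nonneg (z.re - 1 / 2)]
  have hi3 : z'.im ≤ 1 / 2 := by nlinarith [sq_nonneg (z'.re - 1 / 2)]
  have hi4 : -(1 / 2) ≤ z'.im := by nlinarith [sq_nonneg (z'.re - 1 / 2)]
  have hb : b = b' := by
    have h1 : (b : ℝ) < b' + 1 := by linarith
    have h2 : (b' : ℝ) < b + 1 := by linarith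
    norm_cast at h1 h2
    omega
  subst hb
  exact add_left_cancel h

/-! ### Compositions and their contraction -/

lemma cfComp_zero (ω : ℕ → ℂ) (z : ℂ) : cfComp ω 0 z = z := by simp [cfComp]

lemma cfComp_succ (ω : ℕ → ℂ) (m : ℕ) (z : ℂ) :
    cfComp ω (m + 1) z = (ω 0 + cfComp (fun k => ω (k + 1)) m z)⁻¹ := by
  simp [cfComp, List.ofFn_succ]

lemma inX_cfComp (m : ℕ) : ∀ (ω : ℕ → ℂ), (∀ k, ω k ∈ Egauss) → ∀ z, InX z →
    InX (cfComp ω m z) := by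
  induction m with
  | zero => intro ω _ z hz; rwa [cfComp_zero]
  | succ m ih =>
    intro ω hω z hz
    rw [cfComp_succ]
    exact (ih _ (fun k => hω _) z hz).phi (hω 0)

/-- A single map `φ_e` does not increase distances on the disk; it is not a strict contraction,
since `φ_1` has derivative of modulus one at `0`. -/
lemma phi_lipschitz {e z w : ℂ} (he : e ∈ Egauss) (hz : InX z) (hw : InX w) :
    ‖(e + z)⁻¹ - (e + w)⁻¹‖ ≤ ‖z - w‖ := by
  rw [inv_sub_inv (add_ne_zero_of_inX he hz) (add_ne_zero_of_inX he hw), norm_div, norm_mul]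
  have h1 : 1 ≤ ‖e + z‖ := (one_le_re_add he hz).trans (Complex.re_le_norm _)
  have h2 : 1 ≤ ‖e + w‖ := (one_le_re_add he hw).trans (Complex.re_le_norm _)
  rw [div_le_iff₀ (by positivity), show e + w - (e + z) = -(z - w) by ring, norm_neg]
  nlinarith [norm_nonneg (z - w), mul_le_mul h1 h2 (by norm_num) (by positivity)]

lemma two_le_norm {a b z : ℂ} (ha : a ∈ Egauss) (hb : b ∈ Egauss) (hz : InX z) :
    2 ≤ ‖a + (b + z)⁻¹‖ * ‖b + z‖ := by
  set v := b + z with hv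
  have h1 : 1 ≤ v.re := one_le_re_add hb hz
  have hn : 1 ≤ ‖v‖ := h1.trans (Complex.re_le_norm _)
  have h2 : 1 + (‖v‖ ^ 2)⁻¹ ≤ (a + v⁻¹).re := by
    have h3 := one_le_re ha
    rw [Complex.add_re, Complex.inv_re, Complex.normSq_eq_norm_sq, div_eq_mul_inv]
    have : 0 < (‖v‖ ^ 2)⁻¹ := by positivity
    nlinarith
  have h4 := h2.trans (Complex.re_le_norm _)
  have h5 : (1 + (‖v‖ ^ 2)⁻¹) * ‖v‖ ≤ ‖a + v⁻¹‖ * ‖v‖ := by gcongr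
  refine le_trans ?_ h5
  have h6 : (1 + (‖v‖ ^ 2)⁻¹) * ‖v‖ - 2 = (‖v‖ - 1) ^ 2 / ‖v‖ := by field_simp; ring
  have : 0 ≤ (‖v‖ - 1) ^ 2 / ‖v‖ := by positivity
  linarith

/-- Any composition of two of the maps contracts by the factor `1/4`, because
`|a + 1/v| |v| ≥ |v| + 1/|v| ≥ 2` when `Re a ≥ 1` and `Re v ≥ 1`. -/
lemma phi_phi_lipschitz {a b z w : ℂ} (ha : a ∈ Egauss) (hb : b ∈ Egauss) (hz : InX z)
    (hw : InX w) : ‖(a + (b + z)⁻¹)⁻¹ - (a + (b + w)⁻¹)⁻¹‖ ≤ ‖z - w‖ / 4 := by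
  have h1 := two_le_norm ha hb hz
  have h2 := two_le_norm ha hb hw
  have hbz := add_ne_zero_of_inX hb hz
  have hbw := add_ne_zero_of_inX hb hw
  have haz := add_ne_zero_of_inX ha (hz.phi hb)
  have haw := add_ne_zero_of_inX ha (hw.phi hb)
  have h3 : (a + (b + z)⁻¹)⁻¹ - (a + (b + w)⁻¹)⁻¹ =
      (z - w) / (((a + (b + z)⁻¹) * (b + z)) * ((a + (b + w)⁻¹) * (b + w))) := by
    rw [inv_sub_inv haz haw, show a + (b + w)⁻¹ - (a + (b + z)⁻¹) = (b + w)⁻¹ - (b + z)⁻¹ by ring,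
      inv_sub_inv hbw hbz, div_div]
    congr 1 <;> ring
  rw [h3, norm_div, norm_mul, norm_mul, norm_mul]
  gcongr
  nlinarith [mul_le_mul h1 h2 (by norm_num) (by positivity)]

lemma cfComp_contract (m : ℕ) : ∀ (ω : ℕ → ℂ), (∀ k, ω k ∈ Egauss) → ∀ z w, InX z → InX w →
    ‖cfComp ω m z - cfComp ω m w‖ ≤ 2 * (1 / 2) ^ m * ‖z - w‖ := by
  induction m using Nat.twoStepInduction with
  | zero =>
    intro ω _ z w _ _
    rw [cfComp_zero, cfComp_zero]
    nlinarith [norm_nonneg (z - w)]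
  | one =>
    intro ω hω z w hz hw
    simpa [cfComp_succ, cfComp_zero] using phi_lipschitz (hω 0) hz hw
  | more m ih _ =>
    intro ω hω z w hz hw
    have h1 := ih (fun k => ω (k + 1 + 1)) (fun k => hω _) z w hz hw
    have h2 := phi_phi_lipschitz (hω 0) (hω 1)
      (inX_cfComp m (fun k => ω (k + 1 + 1)) (fun k => hω _) z hz)
      (inX_cfComp m (fun k => ω (k + 1 + 1)) (fun k => hω _) w hw)
    simp only [cfComp_succ]
    refine h2.trans ?_
    calc _ ≤ (2 * (1 / 2) ^ m * ‖z - w‖) / 4 := by gcongr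
      _ = _ := by ring

open scoped Topology in
lemma cfComp_sub_tendsto {ω : ℕ → ℂ} (hω : ∀ k, ω k ∈ Egauss) {z w : ℂ} (hz : InX z)
    (hw : InX w) : Tendsto (fun m => cfComp ω m z - cfComp ω m w) atTop (𝓝 0) := by
  refine squeeze_zero_norm (fun m => cfComp_contract m ω hω z w hz hw) ?_
  have := ((tendsto_pow_atTop_nhds_zero_of_lt_one (r := (1 / 2 : ℝ)) (by norm_num)
    (by norm_num)).const_mul 2).mul_const ‖z - w‖
  simpa using this

/-! ### Self-similarity of the limit set -/

lemma inX_of_mem {z : ℂ} (hz : z ∈ cfLimitSet Egauss) : InX z := by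
  obtain ⟨ω, hω, h⟩ := hz
  exact isClosed_inX.mem_of_tendsto h (Eventually.of_forall fun m => inX_cfComp m ω hω 0 inX_zero)

lemma phi_mem {e z : ℂ} (he : e ∈ Egauss) (hz : z ∈ cfLimitSet Egauss) :
    (e + z)⁻¹ ∈ cfLimitSet Egauss := by
  have hX := inX_of_mem hz
  obtain ⟨ω, hω, h⟩ := hz
  refine ⟨fun k => Nat.casesOn k e ω, ?_, ?_⟩
  · rintro (_ | k)
    · exact he
    · exact hω k
  · rw [← tendsto_add_atTop_iff_nat 1]
    simp only [cfComp_succ]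
    exact (h.const_add e).inv₀ (add_ne_zero_of_inX he hX)

lemma exists_phi_eq {z : ℂ} (hz : z ∈ cfLimitSet Egauss) :
    ∃ e ∈ Egauss, ∃ z' ∈ cfLimitSet Egauss, z = (e + z')⁻¹ := by
  obtain ⟨ω, hω, h⟩ := hz
  rw [← tendsto_add_atTop_iff_nat 1] at h
  simp only [cfComp_succ] at h
  have hX : ∀ m, InX (cfComp (fun k => ω (k + 1)) m 0) :=
    fun m => inX_cfComp m _ (fun k => hω _) 0 inX_zero
  -- The limit is nonzero: the approximants are inverses of points of modulus at most `|ω 0| + 1`.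
  have hz0 : z ≠ 0 := by
    have hle : ∀ m, (‖ω 0‖ + 1)⁻¹ ≤ ‖(ω 0 + cfComp (fun k => ω (k + 1)) m 0)⁻¹‖ := by
      intro m
      have h1 := add_ne_zero_of_inX (hω 0) (hX m)
      have h2 := hX m
      set q := cfComp (fun k => ω (k + 1)) m 0
      have h3 : ‖q‖ ≤ 1 := by
        unfold InX at h2
        rw [Complex.normSq_eq_norm_sq] at h2
        nlinarith [Complex.re_le_norm q, norm_nonneg q]
      rw [norm_inv]
      have : 0 < ‖ω 0 + q‖ := norm_pos_iff.2 h1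
      gcongr
      exact (norm_add_le _ _).trans (by linarith)
    have h4 := ge_of_tendsto' h.norm hle
    have : 0 < (‖ω 0‖ + 1)⁻¹ := by positivity
    exact norm_pos_iff.1 (this.trans_le h4)
  refine ⟨ω 0, hω 0, z⁻¹ - ω 0, ⟨fun k => ω (k + 1), fun k => hω _, ?_⟩, by simp⟩
  have := (h.inv₀ hz0).sub_const (ω 0)
  simpa using this

/-- Inside the open disk, `φ_e` pulls the limit set back into itself. -/
lemma mem_of_phi_mem {e z : ℂ} (he : e ∈ Egauss) (hz : InIntX z)
    (h : (e + z)⁻¹ ∈ cfLimitSet Egauss) : z ∈ cfLimitSet Egauss := by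
  obtain ⟨e', he', z', hz', heq⟩ := exists_phi_eq h
  rwa [eq_of_add_eq_add he he' hz (inX_of_mem hz') (inv_injective heq)]

/-- The limit set misses a neighbourhood of `1 / (2 + i/2) = (8 - 2i)/17`, since `2 + i/2` lies in
the gap between four of the tangent disks `e + X`. -/
lemma gap {z : ℂ} (hz : ‖z⁻¹ - (2 + (1 / 2 : ℝ) * Complex.I)‖ < 1 / 10) :
    z ∉ cfLimitSet Egauss := by
  intro h
  obtain ⟨e, ⟨a, b, -, rfl⟩, q, hq, rfl⟩ := exists_phi_eq h
  have hX := inX_of_mem hq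
  unfold InX at hX
  rw [Complex.normSq_apply] at hX
  rw [inv_inv] at hz
  have h1 := (Complex.abs_re_le_norm _).trans_lt hz
  have h2 := (Complex.abs_im_le_norm _).trans_lt hz
  simp at h1 h2
  rw [abs_lt] at h1 h2
  have hi1 : q.im ≤ 1 / 2 := by nlinarith [sq_nonneg (q.re - 1 / 2)]
  have hi2 : -(1 / 2) ≤ q.im := by nlinarith [sq_nonneg (q.re - 1 / 2)]
  have hr1 : 0 ≤ q.re := by nlinarith
  have hr2 : q.re ≤ 1 := by nlinarith
  have ha1 : (a : ℝ) < 3 := by linarith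
  have ha2 : (0 : ℝ) < a := by linarith
  have hb1 : (b : ℝ) < 2 := by linarith
  have hb2 : (-1 : ℝ) < b := by linarith
  norm_cast at ha1 ha2
  have hb1' : b < 2 := by exact_mod_cast hb1
  have hb2' : -1 < b := by exact_mod_cast hb2
  -- The four neighbouring disks are those with `a ∈ {1, 2}` and `b ∈ {0, 1}`.
  interval_cases a <;> interval_cases b <;> norm_num at h1 h2 <;> nlinarith

/-! ### The golden mean -/

/-- The fixed point `(√5 - 1)/2` of `φ_1`. -/
noncomputable def gm : ℝ := (√5 - 1) / 2

lemma gm_sq : gm ^ 2 = 1 - gm := by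
  have := Real.sq_sqrt (show (0 : ℝ) ≤ 5 by norm_num)
  unfold gm; nlinarith

lemma gm_gt : 0.618 < gm := by
  have : (2.236 : ℝ) < √5 := Real.lt_sqrt_of_sq_lt (by norm_num)
  unfold gm; linarith

lemma gm_lt : gm < 0.6181 := by
  have : √5 < (2.2362 : ℝ) := by
    rw [Real.sqrt_lt' (by norm_num)]; norm_num
  unfold gm; linarith

lemma inIntX_gm : InIntX (gm : ℂ) := by
  unfold InIntX
  rw [Complex.normSq_ofReal, Complex.ofReal_re]
  nlinarith [gm_gt, gm_lt]

lemma one_mem : (1 : ℂ) ∈ Egauss := ⟨1, 0, le_rfl, by simp⟩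

lemma gm_sqC : (gm : ℂ) ^ 2 = 1 - gm := by exact_mod_cast gm_sq

lemma phi_gm : (1 + (gm : ℂ))⁻¹ = gm := by
  refine inv_eq_of_mul_eq_one_right ?_
  linear_combination gm_sqC

lemma cfComp_gm (m : ℕ) : cfComp (fun _ => 1) m gm = gm := by
  induction m with
  | zero => rw [cfComp_zero]
  | succ m ih => rw [cfComp_succ, ih, phi_gm]

lemma gm_mem : (gm : ℂ) ∈ cfLimitSet Egauss := by
  refine ⟨fun _ => 1, fun _ => one_mem, ?_⟩
  have := (cfComp_sub_tendsto (fun _ => one_mem) inX_zero inIntX_gm.inX).add_const (gm : ℂ)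
  simpa [cfComp_gm] using this

/-- The Möbius map sending `0` and `∞` to the two fixed points `gm` and `-1 - gm` of `φ_1`;
it conjugates `φ_1` to multiplication by `-gm²`. -/
noncomputable def mob (w : ℂ) : ℂ := (gm + (1 + gm) * w) / (1 - w)

lemma one_sub_ne {w : ℂ} (hw : ‖w‖ < 1) : 1 - w ≠ 0 := by
  intro h
  rw [← sub_eq_zero.1 h] at hw
  simp at hw

lemma mob_mul {w : ℂ} (hw : ‖w‖ < 1) : mob (-gm ^ 2 * w) = (1 + mob w)⁻¹ := by
  have h1 := one_sub_ne hw
  have h2 : (1 : ℂ) - (-gm ^ 2 * w) ≠ 0 := by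
    refine one_sub_ne ?_
    rw [norm_mul, norm_neg, norm_pow, Complex.norm_real, Real.norm_eq_abs, sq_abs, gm_sq]
    nlinarith [norm_nonneg w, gm_gt, gm_lt]
  refine eq_inv_of_mul_eq_one_left ?_
  unfold mob
  rw [one_add_div h1, div_mul_div_comm, div_eq_one_iff_eq (mul_ne_zero h2 h1)]
  have h := gm_sqC
  linear_combination (1 - w * (1 + gm + gm ^ 2) - gm ^ 2 * w ^ 2) * h

lemma inIntX_mob {w : ℂ} (hw : ‖w‖ < 1 / 8) : InIntX (mob w) := by
  have h1 := one_sub_ne (hw.trans (by norm_num))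
  have h2 : 7 / 8 < ‖1 - w‖ := by
    have := norm_sub_norm_le (1 : ℂ) w
    rw [norm_one] at this
    linarith
  have h3 : mob w - 1 / 2 = (((gm - 1 / 2 : ℝ) : ℂ) + ((3 / 2 + gm : ℝ) : ℂ) * w) / (1 - w) := by
    unfold mob
    rw [eq_div_iff h1, sub_mul, div_mul_cancel₀ _ h1]
    push_cast
    ring
  have h4 : ‖mob w - 1 / 2‖ < 1 / 2 := by
    rw [h3, norm_div, div_lt_iff₀ (by linarith)]
    refine (norm_add_le _ _).trans_lt ?_
    rw [norm_mul, Complex.norm_real, Complex.norm_real, Real.norm_eq_abs, Real.norm_eq_abs,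
      abs_of_pos (by linarith [gm_gt]), abs_of_pos (by linarith [gm_gt])]
    nlinarith [gm_gt, gm_lt, norm_nonneg w]
  have h5 : ‖mob w - 1 / 2‖ ^ 2 < 1 / 4 := by nlinarith [norm_nonneg (mob w - 1 / 2)]
  rw [← Complex.normSq_eq_norm_sq, Complex.normSq_apply] at h5
  unfold InIntX
  rw [Complex.normSq_apply]
  norm_num at h5
  nlinarith

lemma mem_of_mob_pow_mem (n : ℕ) : ∀ {w : ℂ}, ‖w‖ < 1 / 8 →
    mob ((-gm ^ 2) ^ n * w) ∈ cfLimitSet Egauss → mob w ∈ cfLimitSet Egauss := by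
  induction n with
  | zero => intro w _ h; simpa using h
  | succ n ih =>
    intro w hw h
    have hn : ‖(-(gm : ℂ) ^ 2) * w‖ < 1 / 8 := by
      rw [norm_mul, norm_neg, norm_pow, Complex.norm_real, Real.norm_eq_abs, sq_abs, gm_sq]
      nlinarith [norm_nonneg w, gm_gt, gm_lt]
    rw [pow_succ, mul_assoc] at h
    have h1 := ih hn h
    rw [mob_mul (hw.trans (by norm_num))] at h1
    exact mem_of_phi_mem one_mem (inIntX_mob hw) h1

open scoped Topology in
/-- One hole of the preimage of the limit set under `mob`, inside the disk where the
self-similarity under multiplication by `-gm²` is available. -/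
lemma exists_hole : ∃ w₀ : ℂ, ∃ s > (0 : ℝ), ∀ w ∈ ball w₀ s,
    ‖w‖ < 1 / 8 ∧ mob w ∉ cfLimitSet Egauss := by
  -- `w₀` is the preimage under `mob` of the point `z₀ = 1 / (2 + i/2)` in a gap.
  set z₀ : ℂ := ⟨8 / 17, -2 / 17⟩ with hz₀
  have hinv : z₀⁻¹ = 2 + (1 / 2 : ℝ) * Complex.I := by
    refine inv_eq_of_mul_eq_one_right ?_
    apply Complex.ext <;> simp [hz₀] <;> norm_num
  have hd : z₀ + 1 + gm ≠ 0 := by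
    intro h
    have := congrArg Complex.im h
    simp [hz₀] at this
  set w₀ : ℂ := (z₀ - gm) / (z₀ + 1 + gm) with hw₀
  have hw : ‖w₀‖ < 1 / 8 := by
    rw [hw₀, norm_div, div_lt_iff₀ (norm_pos_iff.2 hd)]
    refine lt_of_pow_lt_pow_left₀ 2 (by positivity) ?_
    rw [mul_pow, ← Complex.normSq_eq_norm_sq, ← Complex.normSq_eq_norm_sq, Complex.normSq_apply,
      Complex.normSq_apply]
    simp [hz₀]
    nlinarith [gm_gt, gm_lt]
  have h1 := one_sub_ne (hw.trans (by norm_num))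
  have hm : mob w₀ = z₀ := by
    unfold mob
    rw [div_eq_iff h1, hw₀]
    field_simp
    ring
  have hz0 : z₀ ≠ 0 := by
    intro h
    have := congrArg Complex.im h
    simp [hz₀] at this
  have hc : ContinuousAt mob w₀ := by
    unfold mob
    exact ContinuousAt.div (by fun_prop) (by fun_prop) h1
  have hc2 : Tendsto (fun w => (mob w)⁻¹) (𝓝 w₀) (𝓝 (2 + (1 / 2 : ℝ) * Complex.I)) := by
    have := hc.tendsto
    rw [hm] at this
    simpa [hinv] using this.inv₀ hz0
  have e1 : ∀ᶠ w in 𝓝 w₀, ‖w‖ < 1 / 8 := (continuous_norm.tendsto w₀).eventually_lt_const hw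
  have e2 : ∀ᶠ w in 𝓝 w₀, ‖(mob w)⁻¹ - (2 + (1 / 2 : ℝ) * Complex.I)‖ < 1 / 10 := by
    have := hc2 (Metric.ball_mem_nhds _ (show (0 : ℝ) < 1 / 10 by norm_num))
    filter_upwards [this] with w hw
    simpa [dist_eq_norm] using hw
  obtain ⟨s, hs, h⟩ := Metric.eventually_nhds_iff_ball.1 (e1.and e2)
  exact ⟨w₀, s, hs, fun w hw => ⟨(h w hw).1, gap (h w hw).2⟩⟩

lemma hasHoles_mob : HasHoles (mob ⁻¹' cfLimitSet Egauss) 0 := by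
  obtain ⟨w₀, s, hs, h⟩ := exists_hole
  have hw₀ := (h w₀ (mem_ball_self hs)).1
  have hg := gm_gt
  have hg' := gm_lt
  have hnorm : ∀ n : ℕ, ‖(-(gm : ℂ) ^ 2) ^ n‖ = (gm ^ 2) ^ n := by
    intro n
    rw [norm_pow, norm_neg, norm_pow, Complex.norm_real, Real.norm_eq_abs, sq_abs]
  have hgp : 0 < gm := by linarith
  refine ⟨gm ^ 2 * s, by positivity, 1, one_pos, ?_⟩
  rintro r ⟨hr, hr1⟩
  obtain ⟨n, hn1, hn2⟩ := exists_nat_pow_near_of_lt_one hr hr1.le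
    (show 0 < gm ^ 2 by positivity) (by rw [gm_sq]; linarith)
  refine ⟨(-(gm : ℂ) ^ 2) ^ (n + 1) * w₀, ?_, ?_⟩
  · rw [dist_zero_right, norm_mul, hnorm]
    have : (gm ^ 2) ^ (n + 1) * ‖w₀‖ ≤ (gm ^ 2) ^ (n + 1) * 1 := by gcongr; linarith
    linarith
  · intro q hq hqJ
    set l : ℂ := (-(gm : ℂ) ^ 2) ^ (n + 1) with hl
    have hln : ‖l‖ = (gm ^ 2) ^ (n + 1) := hnorm _
    have hlp : 0 < ‖l‖ := by rw [hln]; positivity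
    have hl0 : l ≠ 0 := norm_pos_iff.1 hlp
    have hql : q = l * (q / l) := by field_simp
    have hb : q / l ∈ ball w₀ s := by
      rw [mem_ball, dist_eq_norm] at hq ⊢
      rw [hql, ← mul_sub, norm_mul] at hq
      have h1 : gm ^ 2 * s * r ≤ ‖l‖ * s := by
        rw [hln, pow_succ]
        have : gm ^ 2 * s * r ≤ gm ^ 2 * s * (gm ^ 2) ^ n := by gcongr
        exact this.trans_eq (by ring)
      exact lt_of_mul_lt_mul_left (hq.trans_le h1) hlp.le
    obtain ⟨h1, h2⟩ := h _ hb
    refine h2 (mem_of_mob_pow_mem (n + 1) h1 ?_)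
    rw [← hl, ← hql]
    exact hqJ

lemma hasHoles_gm : HasHoles (cfLimitSet Egauss) (gm : ℂ) := by
  have hd : HasStrictDerivAt mob (1 + 2 * gm) 0 := by
    have h1 : HasStrictDerivAt (fun w : ℂ => (gm : ℂ) + (1 + gm) * w) (1 + gm) 0 := by
      simpa using ((hasStrictDerivAt_id (0 : ℂ)).const_mul (1 + (gm : ℂ))).const_add (gm : ℂ)
    have h2 : HasStrictDerivAt (fun w : ℂ => 1 - w) (-1) 0 :=
      (hasStrictDerivAt_id (0 : ℂ)).const_sub 1
    have h3 := h1.fun_div h2 (by simp)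
    have h4 : ((1 + (gm : ℂ)) * (1 - 0) - (gm + (1 + gm) * 0) * -1) / (1 - 0) ^ 2 = 1 + 2 * gm := by
      ring
    rw [← h4]
    exact h3
  have hne : (1 + 2 * (gm : ℂ)) ≠ 0 := by
    have : (1 + 2 * gm : ℝ) ≠ 0 := by linarith [gm_gt]
    exact_mod_cast this
  have h := hasHoles_mob.map (B := cfLimitSet Egauss) hd hne (Eventually.of_forall fun z h => h)
  simpa [mob] using h

lemma HasHoles.phi {e x : ℂ} (he : e ∈ Egauss) (hx : InIntX x)
    (h : HasHoles (cfLimitSet Egauss) x) : HasHoles (cfLimitSet Egauss) (e + x)⁻¹ := by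
  have h0 := add_ne_zero_of_inX he hx.inX
  have hd : HasStrictDerivAt (fun z : ℂ => (e + z)⁻¹) (-((e + x) ^ 2)⁻¹ * 1) x :=
    (hasStrictDerivAt_inv h0).comp x ((hasStrictDerivAt_id x).const_add e)
  refine h.map hd (by simpa using h0) ?_
  filter_upwards [isOpen_inIntX.mem_nhds hx] with z hz hzJ
  exact mem_of_phi_mem he hz hzJ

lemma cfComp_gm_good (m : ℕ) : ∀ ω : ℕ → ℂ, (∀ k, ω k ∈ Egauss) →
    cfComp ω m gm ∈ cfLimitSet Egauss ∧ InIntX (cfComp ω m gm) ∧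
      HasHoles (cfLimitSet Egauss) (cfComp ω m gm) := by
  induction m with
  | zero => intro ω _; rw [cfComp_zero]; exact ⟨gm_mem, inIntX_gm, hasHoles_gm⟩
  | succ m ih =>
    intro ω hω
    obtain ⟨h1, h2, h3⟩ := ih (fun k => ω (k + 1)) (fun k => hω _)
    rw [cfComp_succ]
    exact ⟨phi_mem (hω 0) h1, h2.phi (hω 0), h3.phi (hω 0) h2⟩

/-! ### Failure of uniform porosity -/

/-- Near `1/M` at scale `1/(2M)` the limit set is `O(M⁻²)`-dense: inverting, every point of real
part at least one is within bounded distance of a point `e + gm` with `e` in the alphabet. -/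
lemma exists_near {M : ℝ} (hM : 9 ≤ M) {y : ℂ} (hy : ‖y - (M⁻¹ : ℝ)‖ < (2 * M)⁻¹) :
    ∃ p ∈ cfLimitSet Egauss, ‖p - y‖ ≤ 27 / (2 * M ^ 2) := by
  have hMp : 0 < M := by linarith
  have h2M : (2 * M)⁻¹ = M⁻¹ / 2 := by field_simp
  have hMi : 0 < M⁻¹ := by positivity
  rw [h2M] at hy
  have hre : M⁻¹ / 2 < y.re := by
    have := (Complex.abs_re_le_norm _).trans_lt hy
    rw [Complex.sub_re, Complex.ofReal_re, abs_lt] at this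
    linarith
  have hny : ‖y‖ < 3 / 2 * M⁻¹ := by
    have := norm_le_norm_sub_add y ((M⁻¹ : ℝ) : ℂ)
    rw [Complex.norm_real, Real.norm_eq_abs, abs_of_pos hMi] at this
    linarith
  have hnp : 0 < ‖y‖ := (by positivity : 0 < M⁻¹ / 2).trans_le (hre.le.trans (Complex.re_le_norm _))
  have hy0 : y ≠ 0 := norm_pos_iff.1 hnp
  obtain ⟨w, hw⟩ : ∃ w, w = y⁻¹ := ⟨_, rfl⟩
  have hwn : 2 / 3 * M < ‖w‖ := by
    rw [hw, norm_inv, lt_inv_comm₀ (by positivity) hnp]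
    calc ‖y‖ < _ := hny
      _ = _ := by field_simp
  have hwre : 1 ≤ w.re := by
    rw [hw, Complex.inv_re, Complex.normSq_eq_norm_sq, le_div_iff₀ (by positivity)]
    have h1 : ‖y‖ ^ 2 < (3 / 2 * M⁻¹) ^ 2 := by gcongr
    have h2 : M⁻¹ ≤ 9⁻¹ := by gcongr
    nlinarith
  set e : ℂ := (⌊w.re⌋ : ℂ) + (⌊w.im⌋ : ℂ) * Complex.I with he
  have heE : e ∈ Egauss := ⟨⌊w.re⌋, ⌊w.im⌋, Int.le_floor.2 (by exact_mod_cast hwre), rfl⟩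
  have hd : ‖w - (e + gm)‖ ≤ 3 := by
    have h1 : ‖w - e‖ ≤ 2 := by
      refine (Complex.norm_le_abs_re_add_abs_im _).trans ?_
      have a1 : (w - e).re = Int.fract w.re := by simp [he]
      have a2 : (w - e).im = Int.fract w.im := by simp [he]
      rw [a1, a2, abs_of_nonneg (Int.fract_nonneg _), abs_of_nonneg (Int.fract_nonneg _)]
      linarith [Int.fract_lt_one w.re, Int.fract_lt_one w.im]
    have h2 : ‖(gm : ℂ)‖ ≤ 1 := by
      rw [Complex.norm_real, Real.norm_eq_abs, abs_of_pos (by linarith [gm_gt])]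
      linarith [gm_lt]
    calc ‖w - (e + gm)‖ = ‖(w - e) - gm‖ := by ring_nf
      _ ≤ ‖w - e‖ + ‖(gm : ℂ)‖ := norm_sub_le _ _
      _ ≤ 3 := by linarith
  have heg : M / 3 ≤ ‖e + gm‖ := by
    have := norm_sub_norm_le w (e + gm)
    linarith
  refine ⟨(e + gm)⁻¹, phi_mem heE gm_mem, ?_⟩
  have hw0 : w ≠ 0 := by rw [hw]; exact inv_ne_zero hy0
  rw [show y = w⁻¹ by rw [hw, inv_inv], inv_sub_inv (add_ne_zero_of_inX heE inIntX_gm.inX) hw0,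
    norm_div, norm_mul]
  calc ‖w - (e + gm)‖ / (‖e + gm‖ * ‖w‖) ≤ 3 / (M / 3 * (2 / 3 * M)) := by gcongr
    _ = 27 / (2 * M ^ 2) := by field_simp; norm_num

lemma not_porous : ¬ Porous (cfLimitSet Egauss) := by
  rintro ⟨c, ⟨hc, -⟩, r₀, hr₀, H⟩
  obtain ⟨m, hm⟩ := exists_nat_gt (max 9 (max r₀⁻¹ (54 / c)))
  obtain ⟨hm1, hm2, hm3⟩ : 9 < (m : ℝ) ∧ r₀⁻¹ < m ∧ 54 / c < m := by
    simpa [max_lt_iff] using hm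
  set M : ℝ := m + gm with hM
  have hgp := gm_gt
  have hMp : 0 < M := by linarith
  have hmE : (m : ℂ) ∈ Egauss := by
    refine ⟨m, 0, ?_, by simp⟩
    have : (1 : ℝ) < m := by linarith
    have : 1 < m := by exact_mod_cast this
    omega
  have hx := phi_mem hmE gm_mem
  rw [show ((m : ℂ) + gm)⁻¹ = ((M⁻¹ : ℝ) : ℂ) by rw [hM]; push_cast; rfl] at hx
  have hr : (0 : ℝ) < (2 * M)⁻¹ := by positivity
  have hrr : (2 * M)⁻¹ < r₀ := by
    rw [inv_lt_comm₀ (by positivity) hr₀]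
    linarith
  have hpor := H _ hx _ ⟨hr, hrr⟩
  unfold por at hpor
  obtain ⟨c', ⟨-, y, hy⟩, hcc⟩ := exists_lt_of_lt_csSup
    (⟨0, le_rfl, 0, by simp⟩ : Set.Nonempty {c : ℝ | 0 ≤ c ∧ ∃ y : ℂ, ball y (c * (2 * M)⁻¹) ⊆
      ball ((M⁻¹ : ℝ) : ℂ) (2 * M)⁻¹ \ cfLimitSet Egauss}) ((half_lt_self hc).trans_le hpor)
  have hc'r : 0 < c' * (2 * M)⁻¹ := mul_pos (by linarith) hr
  have hyb := (hy (mem_ball_self hc'r)).1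
  rw [mem_ball, dist_eq_norm] at hyb
  obtain ⟨p, hp, hpy⟩ := exists_near (by linarith) hyb
  refine (hy (show p ∈ ball y _ from ?_)).2 hp
  rw [mem_ball, dist_eq_norm]
  refine hpy.trans_lt ?_
  have h1 : 54 / c < M := by linarith
  rw [div_lt_iff₀ hc] at h1
  rw [← div_eq_mul_inv, div_lt_div_iff₀ (by positivity) (by positivity)]
  have h2 : 27 < c' * M := by nlinarith
  nlinarith [mul_pos hMp (sub_pos.2 h2)]

/-- The limit set of the full complex continued fraction system
(alphabet `E`) is not porous, but it is porous at every point of some dense subset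
of itself. -/
theorem stmt13 :
    ¬ Porous (cfLimitSet Egauss) ∧
      ∃ D : Set ℂ, D ⊆ cfLimitSet Egauss ∧ cfLimitSet Egauss ⊆ closure D ∧
        ∀ x ∈ D, PorousAt (cfLimitSet Egauss) x := by
  refine ⟨not_porous, {x | ∃ ω : ℕ → ℂ, (∀ k, ω k ∈ Egauss) ∧ ∃ m, cfComp ω m gm = x}, ?_, ?_, ?_⟩
  · rintro _ ⟨ω, hω, m, rfl⟩
    exact (cfComp_gm_good m ω hω).1
  · rintro z ⟨ω, hω, h⟩
    have h1 := (cfComp_sub_tendsto hω inIntX_gm.inX inX_zero).add h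
    simp only [sub_add_cancel, zero_add] at h1
    exact mem_closure_of_tendsto h1 (Eventually.of_forall fun m => ⟨ω, hω, m, rfl⟩)
  · rintro _ ⟨ω, hω, m, rfl⟩
    exact (cfComp_gm_good m ω hω).2.2.porousAt
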